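/- Let d ≥ 2, s > 1 + d/2, δ ∈ (0,1/2), and let u^{h,ω,n} be the high-frequency approximate velocity. For every r ≥ 0 there exists a constant C = C(r,s,d,δ,φ) such that for all n ≥ 1, all t ∈ ℝ, and ω ∈ {±1}, ‖u^{h,ω,n}(t,·)‖_{H^r(ℝ^d)} ≤ C n^{r−s}. -/

import Mathlib

open MeasureTheory Real Filter Finset Matrix
open scoped FourierTransform Topology

noncomputable section

abbrev Ed (d : ℕ) : Type := EuclideanSpace ℝ (Fin d)

variable {d : ℕ}

/-- The Fourier transform of a real-valued function on `ℝ^d`, as a ℂ-valued function. -/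
def FT (f : Ed d → ℝ) : Ed d → ℂ := 𝓕 (fun x => (f x : ℂ))

/-- The Fourier transform of a real-valued function on `ℝ`. -/
def FT1 (f : ℝ → ℝ) : ℝ → ℂ := 𝓕 (fun x => (f x : ℂ))

/-- The Sobolev `H^s` norm on `ℝ^d`, defined via the Fourier transform. -/
def hsNorm (s : ℝ) (f : Ed d → ℝ) : ℝ :=
  (∫ ξ : Ed d, (1 + ‖ξ‖ ^ 2) ^ s * ‖FT f ξ‖ ^ 2) ^ (1/2 : ℝ)

/-- The Sobolev `H^s` norm on `ℝ`. -/
def hsNorm1 (s : ℝ) (f : ℝ → ℝ) : ℝ :=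
  (∫ ξ : ℝ, (1 + ‖ξ‖ ^ 2) ^ s * ‖FT1 f ξ‖ ^ 2) ^ (1/2 : ℝ)

/-- Membership in the Sobolev space `H^s(ℝ^d)`. -/
def MemHs (s : ℝ) (f : Ed d → ℝ) : Prop :=
  Integrable (fun ξ : Ed d => (1 + ‖ξ‖ ^ 2) ^ s * ‖FT f ξ‖ ^ 2)

/-- `H^s` norm of a vector field (sum of the norms of the components). -/
def hsNormV (s : ℝ) (u : Ed d → Fin d → ℝ) : ℝ := ∑ j, hsNorm s (fun x => u x j)

/-- Membership of a vector field in `H^s(ℝ^d; ℝ^d)`. -/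
def MemHsV (s : ℝ) (u : Ed d → Fin d → ℝ) : Prop := ∀ j, MemHs s (fun x => u x j)

/-- Partial derivative `∂_{x_i} f`. -/
def pd (i : Fin d) (f : Ed d → ℝ) (x : Ed d) : ℝ := fderiv ℝ f x (EuclideanSpace.single i 1)

/-- Jacobian matrix `(∇u)_{ij} = ∂_{x_i} u_j`. -/
def gradM (u : Ed d → Fin d → ℝ) (x : Ed d) : Matrix (Fin d) (Fin d) ℝ :=
  Matrix.of fun i j => pd i (fun y => u y j) x

/-- Divergence of a vector field. -/
def divg (u : Ed d → Fin d → ℝ) (x : Ed d) : ℝ := ∑ i, pd i (fun y => u y i) x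

/-- Convective term `(u·∇)v`. -/
def conv (u v : Ed d → Fin d → ℝ) (x : Ed d) : Fin d → ℝ :=
  fun j => ∑ k, u x k * pd k (fun y => v y j) x

/-- The quadratic form `Q(u,v) = ∇u∇v + ∇u(∇v)^T − (∇u)^T∇v − (div u)∇v + (1/2)I(∇u:∇v)`. -/
def Qop (u v : Ed d → Fin d → ℝ) (x : Ed d) : Matrix (Fin d) (Fin d) ℝ :=
  gradM u x * gradM v x + gradM u x * (gradM v x)ᵀ - (gradM u x)ᵀ * gradM v x
    - divg u x • gradM v x
    + ((1/2 : ℝ) * ∑ i, ∑ j, gradM u x i j * gradM v x i j) • (1 : Matrix (Fin d) (Fin d) ℝ)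

/-- `R(u,v) = (div u) v + (u·∇)v`. -/
def Rop (u v : Ed d → Fin d → ℝ) (x : Ed d) : Fin d → ℝ :=
  fun j => divg u x * v x j + conv u v x j

/-- `(1−Δ)⁻¹`, the Fourier multiplier with symbol `(1+|ξ|²)⁻¹`. -/
def invHelm (f : Ed d → ℝ) (x : Ed d) : ℝ :=
  (𝓕⁻ (fun ξ : Ed d => (((1 + ‖ξ‖ ^ 2)⁻¹ : ℝ) : ℂ) * FT f ξ) x).re

/-- `P(u,v) = −(1−Δ)⁻¹[div Q(u,v) + R(u,v)]`, where `(div Q)_j = ∑_i ∂_i Q_{ij}`. -/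
def Pop (u v : Ed d → Fin d → ℝ) (x : Ed d) : Fin d → ℝ :=
  fun j => -invHelm (fun y => (∑ i, pd i (fun z => Qop u v z i j) y) + Rop u v y j) x

/-- `u` solves the Euler–Poincaré system in transport form `∂_t u + (u·∇)u = P(u,u)`
on `[0,T]`. -/
def IsEPSolution (T : ℝ) (u : ℝ → Ed d → Fin d → ℝ) : Prop :=
  ∀ t ∈ Set.Icc (0:ℝ) T, ∀ x : Ed d,
    HasDerivAt (fun τ => u τ x)
      (fun j => Pop (u t) (u t) x j - conv (u t) (u t) x j) t

/-- `u ∈ C([0,T]; H^s)`. -/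
def ContInHs (s T : ℝ) (u : ℝ → Ed d → Fin d → ℝ) : Prop :=
  (∀ t ∈ Set.Icc (0:ℝ) T, MemHsV s (u t)) ∧
  ∀ t₀ ∈ Set.Icc (0:ℝ) T,
    Tendsto (fun t => hsNormV s (fun x j => u t x j - u t₀ x j))
      (𝓝[Set.Icc (0:ℝ) T] t₀) (𝓝 0)

/-- `H^{s}` norm of `∇v` (sum over all entries of the Jacobian). -/
def gradNorm (s : ℝ) (v : Ed d → Fin d → ℝ) : ℝ :=
  ∑ i, ∑ j, hsNorm s (fun x => pd i (fun y => v y j) x)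

/-- Product of cut-offs `φ(x_2)⋯φ(x_d)`. -/
def phiTail [NeZero d] (φ : ℝ → ℝ) (x : Ed d) : ℝ :=
  ∏ i ∈ Finset.univ.erase (0 : Fin d), φ (x i)

/-- The high-frequency approximate velocity `u^{h,ω,n}`. -/
def uh [NeZero d] (s δ : ℝ) (φ : ℝ → ℝ) (ω : ℝ) (n : ℕ) (t : ℝ) (x : Ed d) : Fin d → ℝ :=
  fun j => if j = 0 then
    (n : ℝ) ^ (-(δ/2) - s) * φ (x 0 / (n : ℝ) ^ δ) * Real.sin (n * x 0 - ω * t) * phiTail φ x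
  else 0

/-- The low-frequency initial data `g_{ω,n}`. -/
def glow [NeZero d] (δ : ℝ) (Φ : ℝ → ℝ) (ω : ℝ) (n : ℕ) (x : Ed d) : Fin d → ℝ :=
  fun j => if j = 0 then ω * (n : ℝ)⁻¹ * Φ (x 0 / (n : ℝ) ^ δ) * phiTail Φ x else 0

/-- `H^s` norm of a matrix-valued function (sum of the norms of the entries). -/
def hsNormM (s : ℝ) (M : Ed d → Matrix (Fin d) (Fin d) ℝ) : ℝ :=
  ∑ i, ∑ j, hsNorm s (fun x => M x i j)

/-!
The nonzero component of `u^{h,ω,n}` is an amplitude `n ^ (-δ/2 - s)` times a profile stretched by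
`L = n ^ δ` in the first coordinate, modulated by a sine of frequency `n`. The modulation moves the
Fourier transform to `±n / (2π)`, so Peetre's inequality bounds its effect on the `H^r` norm by a
constant times `n ^ r`, provided the profile is measured in `H^{|r|}`. In that norm of nonnegative
order, stretching by `L ≥ 1` costs at most a factor `√L = n ^ (δ/2)`, the square root of the
Jacobian. The powers of `n` combine to `n ^ (r - s)`.
-/

section Weights

theorem rpow_le_rpow_abs_mul_rpow {x y c : ℝ} (hx : 0 < x) (hy : 0 < y) (hxy : x ≤ c * y)
    (hyx : y ≤ c * x) (r : ℝ) : x ^ r ≤ c ^ |r| * y ^ r := by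
  have hc : 0 < c := pos_of_mul_pos_left (hx.trans_le hxy) hy.le
  rcases le_total 0 r with hr | hr
  · rw [abs_of_nonneg hr, ← mul_rpow hc.le hy.le]
    exact rpow_le_rpow hx.le hxy hr
  · calc x ^ r = c ^ (-r) * (c * x) ^ r := by
          rw [mul_rpow hc.le hx.le, ← mul_assoc, ← rpow_add hc, neg_add_cancel, rpow_zero, one_mul]
      _ ≤ c ^ |r| * y ^ r := by
          rw [abs_of_nonpos hr]
          gcongr 1
          exact rpow_le_rpow_of_nonpos hy hyx hr

theorem one_add_norm_sq_le_two_mul {E : Type*} [SeminormedAddCommGroup E] (x y : E) :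
    1 + ‖x‖ ^ 2 ≤ 2 * (1 + ‖x - y‖ ^ 2) * (1 + ‖y‖ ^ 2) := by
  have htri : ‖x‖ ≤ ‖x - y‖ + ‖y‖ := by simpa using norm_add_le (x - y) y
  have hsq : ‖x‖ ^ 2 ≤ (‖x - y‖ + ‖y‖) ^ 2 := by gcongr
  nlinarith [sq_nonneg (‖x - y‖ - ‖y‖), mul_nonneg (sq_nonneg ‖x - y‖) (sq_nonneg ‖y‖)]

theorem peetre_inequality {E : Type*} [SeminormedAddCommGroup E] (x y : E) (r : ℝ) :
    (1 + ‖x‖ ^ 2) ^ r ≤ 2 ^ |r| * (1 + ‖y‖ ^ 2) ^ r * (1 + ‖x - y‖ ^ 2) ^ |r| := by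
  have hyx : 1 + ‖y‖ ^ 2 ≤ 2 * (1 + ‖x - y‖ ^ 2) * (1 + ‖x‖ ^ 2) := by
    simpa only [norm_sub_rev y x] using one_add_norm_sq_le_two_mul y x
  calc (1 + ‖x‖ ^ 2) ^ r
      ≤ (2 * (1 + ‖x - y‖ ^ 2)) ^ |r| * (1 + ‖y‖ ^ 2) ^ r :=
        rpow_le_rpow_abs_mul_rpow (by positivity) (by positivity)
          (one_add_norm_sq_le_two_mul x y) hyx r
    _ = 2 ^ |r| * (1 + ‖y‖ ^ 2) ^ r * (1 + ‖x - y‖ ^ 2) ^ |r| := by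
        rw [mul_rpow (by positivity) (by positivity)]; ring

end Weights

section SobolevNorm

theorem hsNorm_sq (r : ℝ) (f : Ed d → ℝ) :
    hsNorm r f ^ 2 = ∫ ξ : Ed d, (1 + ‖ξ‖ ^ 2) ^ r * ‖FT f ξ‖ ^ 2 := by
  rw [hsNorm, ← sqrt_eq_rpow, sq_sqrt (integral_nonneg fun _ => by positivity)]

theorem FT_eq_integral (f : Ed d → ℝ) (ξ : Ed d) :
    FT f ξ = ∫ x, Complex.exp (↑(-(2 * π * inner ℝ x ξ)) * Complex.I) * (f x : ℂ) := by
  simp only [FT, fourier_eq', smul_eq_mul, neg_mul]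

theorem FT_const_mul (c : ℝ) (f : Ed d → ℝ) (ξ : Ed d) :
    FT (fun x => c * f x) ξ = c * FT f ξ := by
  simp only [FT_eq_integral, Complex.ofReal_mul, mul_left_comm _ (c : ℂ),
    integral_const_mul]

theorem hsNorm_const_mul_sq (r c : ℝ) (f : Ed d → ℝ) :
    hsNorm r (fun x => c * f x) ^ 2 = c ^ 2 * hsNorm r f ^ 2 := by
  simp only [hsNorm_sq, FT_const_mul, norm_mul, Complex.norm_real, mul_pow, norm_eq_abs, sq_abs,
    mul_left_comm _ (c ^ 2), integral_const_mul]

theorem FT_zero : FT (fun _ : Ed d => 0) = 0 := by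
  ext ξ
  simpa using FT_const_mul 0 (fun _ : Ed d => 0) ξ

theorem hsNorm_zero (r : ℝ) : hsNorm r (fun _ : Ed d => 0) = 0 := by
  simp [hsNorm, FT_zero]

theorem memHs_zero (r : ℝ) : MemHs r (fun _ : Ed d => 0) := by
  simp [MemHs, FT_zero]

theorem memHs_of_contDiff_of_hasCompactSupport {f : Ed d → ℝ} (hf : ContDiff ℝ (⊤ : ℕ∞) f)
    (hfc : HasCompactSupport f) (r : ℝ) : MemHs r f := by
  have hfc' : HasCompactSupport (fun x => (f x : ℂ)) :=
    hfc.comp_left (g := fun y : ℝ => (y : ℂ)) Complex.ofReal_zero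
  let F : SchwartzMap (Ed d) ℂ :=
    hfc'.toSchwartzMap (Complex.ofRealCLM.contDiff.comp hf)
  have hF : FT f = 𝓕 F := (SchwartzMap.fourier_coe F).symm
  let G := SchwartzMap.smulLeftCLM ℂ (fun ξ : Ed d => (1 + ‖ξ‖ ^ 2) ^ (r / 2)) (𝓕 F)
  refine ((G.memLp 2).norm.integrable_sq).congr (Eventually.of_forall fun ξ => ?_)
  have hweight : ((1 + ‖ξ‖ ^ 2) ^ (r / 2)) ^ 2 = (1 + ‖ξ‖ ^ 2) ^ r := by
    rw [← rpow_mul_natCast (by positivity)]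
    norm_num
  simp only [G, hF, SchwartzMap.smulLeftCLM_apply_apply
    (Function.hasTemperateGrowth_one_add_norm_sq_rpow (Ed d) (r / 2)), norm_smul, norm_eq_abs,
    mul_pow, sq_abs, hweight]

end SobolevNorm

section Modulation

open Complex (I)

theorem exp_neg_mul_sin (θ α c : ℝ) :
    Complex.exp (↑(-θ) * I) * (Real.sin (α - c) : ℂ) =
      I / 2 * Complex.exp (c * I) * Complex.exp (↑(-θ - α) * I)
        - I / 2 * Complex.exp (-(c * I)) * Complex.exp (↑(-θ + α) * I) := by
  rw [Complex.ofReal_sin, Complex.sin]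
  push_cast
  simp only [neg_add, sub_eq_add_neg, add_mul, neg_mul, neg_neg, Complex.exp_add]
  ring

theorem FT_mul_sin {f : Ed d → ℝ} (hf : Integrable f) (a ξ : Ed d) (c : ℝ) :
    FT (fun x => f x * Real.sin (2 * π * inner ℝ a x - c)) ξ =
      I / 2 * Complex.exp (c * I) * FT f (ξ + a)
        - I / 2 * Complex.exp (-(c * I)) * FT f (ξ - a) := by
  have hint (η : Ed d) :
      Integrable fun x => Complex.exp (↑(-(2 * π * inner ℝ x η)) * I) * (f x : ℂ) := by
    refine hf.ofReal.bdd_mul (c := 1) (by fun_prop) (Eventually.of_forall fun x => ?_)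
    exact (Complex.norm_exp_ofReal_mul_I _).le
  rw [FT_eq_integral, FT_eq_integral, FT_eq_integral, ← integral_const_mul, ← integral_const_mul,
    ← integral_sub ((hint _).const_mul _) ((hint _).const_mul _)]
  congr 1 with x
  have hadd : -(2 * π * inner ℝ x (ξ + a)) = -(2 * π * inner ℝ x ξ) - 2 * π * inner ℝ a x := by
    rw [inner_add_right, real_inner_comm x a]; ring
  have hsub : -(2 * π * inner ℝ x (ξ - a)) = -(2 * π * inner ℝ x ξ) + 2 * π * inner ℝ a x := by
    rw [inner_sub_right, real_inner_comm x a]; ring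
  rw [hadd, hsub, Complex.ofReal_mul]
  linear_combination (f x : ℂ) * exp_neg_mul_sin (2 * π * inner ℝ x ξ) (2 * π * inner ℝ a x) c

theorem norm_FT_mul_sin_sq_le {f : Ed d → ℝ} (hf : Integrable f) (a ξ : Ed d) (c : ℝ) :
    ‖FT (fun x => f x * Real.sin (2 * π * inner ℝ a x - c)) ξ‖ ^ 2 ≤
      (‖FT f (ξ + a)‖ ^ 2 + ‖FT f (ξ - a)‖ ^ 2) / 2 := by
  have hphase : ‖Complex.exp (-(c * I))‖ = 1 := by
    simpa using Complex.norm_exp_ofReal_mul_I (-c)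
  have hnorm : ‖FT (fun x => f x * Real.sin (2 * π * inner ℝ a x - c)) ξ‖ ≤
      (‖FT f (ξ + a)‖ + ‖FT f (ξ - a)‖) / 2 := by
    rw [FT_mul_sin hf]
    refine (norm_sub_le _ _).trans_eq ?_
    simp only [norm_mul, norm_div, Complex.norm_I, RCLike.norm_ofNat,
      Complex.norm_exp_ofReal_mul_I, hphase]
    ring
  calc _ ≤ ((‖FT f (ξ + a)‖ + ‖FT f (ξ - a)‖) / 2) ^ 2 := by gcongr
    _ ≤ _ := by nlinarith [sq_nonneg (‖FT f (ξ + a)‖ - ‖FT f (ξ - a)‖)]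

theorem hsNorm_mul_sin_sq_le {r : ℝ} {f : Ed d → ℝ} (hf : Integrable f) (hfr : MemHs |r| f)
    (a : Ed d) (c : ℝ) :
    hsNorm r (fun x => f x * Real.sin (2 * π * inner ℝ a x - c)) ^ 2 ≤
      2 ^ |r| * (1 + ‖a‖ ^ 2) ^ r * hsNorm |r| f ^ 2 := by
  let W : Ed d → ℝ := fun ξ => (1 + ‖ξ‖ ^ 2) ^ |r| * ‖FT f ξ‖ ^ 2
  have hWadd : Integrable fun ξ => W (ξ + a) := hfr.comp_add_right a
  have hWsub : Integrable fun ξ => W (ξ - a) := hfr.comp_sub_right a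
  have hpointwise (ξ : Ed d) :
      (1 + ‖ξ‖ ^ 2) ^ r * ‖FT (fun x => f x * Real.sin (2 * π * inner ℝ a x - c)) ξ‖ ^ 2 ≤
        2 ^ |r| * (1 + ‖a‖ ^ 2) ^ r / 2 * (W (ξ + a) + W (ξ - a)) := by
    have hadd := peetre_inequality ξ (-a) r
    have hsub := peetre_inequality ξ a r
    rw [norm_neg, sub_neg_eq_add] at hadd
    calc _ ≤ (1 + ‖ξ‖ ^ 2) ^ r * ((‖FT f (ξ + a)‖ ^ 2 + ‖FT f (ξ - a)‖ ^ 2) / 2) := by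
          gcongr; exact norm_FT_mul_sin_sq_le hf a ξ c
      _ = ((1 + ‖ξ‖ ^ 2) ^ r * ‖FT f (ξ + a)‖ ^ 2
            + (1 + ‖ξ‖ ^ 2) ^ r * ‖FT f (ξ - a)‖ ^ 2) / 2 := by ring
      _ ≤ (2 ^ |r| * (1 + ‖a‖ ^ 2) ^ r * (1 + ‖ξ + a‖ ^ 2) ^ |r| * ‖FT f (ξ + a)‖ ^ 2
            + 2 ^ |r| * (1 + ‖a‖ ^ 2) ^ r * (1 + ‖ξ - a‖ ^ 2) ^ |r| * ‖FT f (ξ - a)‖ ^ 2) / 2 := by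
          gcongr
      _ = _ := by ring
  calc _ ≤ ∫ ξ, 2 ^ |r| * (1 + ‖a‖ ^ 2) ^ r / 2 * (W (ξ + a) + W (ξ - a)) := by
        rw [hsNorm_sq]
        exact integral_mono_of_nonneg (Eventually.of_forall fun _ => by positivity)
          ((hWadd.add hWsub).const_mul _) (Eventually.of_forall hpointwise)
    _ = 2 ^ |r| * (1 + ‖a‖ ^ 2) ^ r * hsNorm |r| f ^ 2 := by
        rw [integral_const_mul, integral_add hWadd hWsub, integral_add_right_eq_self W,
          integral_sub_right_eq_self W, hsNorm_sq]
        ring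

end Modulation

section LinearChangeOfVariables

open Topology (IsClosedEmbedding)

variable {M : Matrix (Fin d) (Fin d) ℝ}

theorem det_coe_toEuclideanCLM (M : Matrix (Fin d) (Fin d) ℝ) :
    LinearMap.det (toEuclideanCLM (𝕜 := ℝ) M : Ed d →ₗ[ℝ] Ed d) = M.det := by
  rw [coe_toEuclideanCLM_eq_toEuclideanLin, toEuclideanLin_eq_toLin_orthonormal,
    LinearMap.det_toLin]

theorem isClosedEmbedding_toEuclideanCLM (hM : M.det ≠ 0) :
    IsClosedEmbedding (toEuclideanCLM (𝕜 := ℝ) M : Ed d → Ed d) := by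
  rw [← det_coe_toEuclideanCLM] at hM
  exact (LinearMap.equivOfDetNeZero _ hM).toContinuousLinearEquiv.toHomeomorph.isClosedEmbedding

theorem integral_comp_toEuclideanCLM {E : Type*} [NormedAddCommGroup E] [NormedSpace ℝ E]
    (hM : M.det ≠ 0) (g : Ed d → E) :
    ∫ x, g (toEuclideanCLM (𝕜 := ℝ) M x) = |M.det|⁻¹ • ∫ x, g x := by
  have hmap : Measure.map (toEuclideanCLM (𝕜 := ℝ) M) (volume : Measure (Ed d)) =
      ENNReal.ofReal |M.det⁻¹| • volume := by
    rw [← det_coe_toEuclideanCLM] at hM ⊢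
    exact Measure.map_linearMap_addHaar_eq_smul_addHaar volume hM
  rw [← (isClosedEmbedding_toEuclideanCLM hM).measurableEmbedding.integral_map g, hmap,
    integral_smul_measure, ENNReal.toReal_ofReal (abs_nonneg _), abs_inv]

theorem FT_comp_toEuclideanCLM (hM : M.det ≠ 0) (f : Ed d → ℝ) (ξ : Ed d) :
    FT (fun x => f (toEuclideanCLM (𝕜 := ℝ) M x)) (toEuclideanCLM (𝕜 := ℝ) Mᵀ ξ) =
      |M.det|⁻¹ • FT f ξ := by
  have hadjoint (x : Ed d) : inner ℝ x (toEuclideanCLM (𝕜 := ℝ) Mᵀ ξ) =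
      inner ℝ (toEuclideanCLM (𝕜 := ℝ) M x) ξ := by
    rw [real_inner_comm _ (toEuclideanCLM (𝕜 := ℝ) M x), inner_toEuclideanCLM,
      inner_toEuclideanCLM, dotProduct_mulVec, vecMul_transpose, dotProduct_comm]
  simp only [FT_eq_integral, hadjoint]
  exact integral_comp_toEuclideanCLM hM
    fun y => Complex.exp (↑(-(2 * π * inner ℝ y ξ)) * Complex.I) * (f y : ℂ)

theorem hsNorm_comp_toEuclideanCLM_sq_le {r : ℝ} (hr : 0 ≤ r) (hM : M.det ≠ 0)
    (hM1 : ‖toEuclideanCLM (𝕜 := ℝ) M‖ ≤ 1) {f : Ed d → ℝ} (hf : MemHs r f) :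
    hsNorm r (fun x => f (toEuclideanCLM (𝕜 := ℝ) M x)) ^ 2 ≤ |M.det|⁻¹ * hsNorm r f ^ 2 := by
  have hcontr (ξ : Ed d) : ‖toEuclideanCLM (𝕜 := ℝ) Mᵀ ξ‖ ≤ ‖ξ‖ := by
    have hnorm : ‖toEuclideanCLM (𝕜 := ℝ) Mᵀ‖ ≤ 1 := by
      rwa [← conjTranspose_eq_transpose_of_trivial, ← star_eq_conjTranspose, map_star,
        ContinuousLinearMap.star_eq_adjoint, LinearIsometryEquiv.norm_map]
    exact (ContinuousLinearMap.le_of_opNorm_le _ hnorm ξ).trans_eq (one_mul _)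
  have hdet : 0 < |M.det| := abs_pos.mpr hM
  have hcov := integral_comp_toEuclideanCLM (M := Mᵀ) (by rwa [det_transpose]) fun ξ : Ed d =>
    (1 + ‖ξ‖ ^ 2) ^ r * ‖FT (fun x => f (toEuclideanCLM (𝕜 := ℝ) M x)) ξ‖ ^ 2
  rw [← hsNorm_sq, det_transpose, smul_eq_mul, eq_inv_mul_iff_mul_eq₀ hdet.ne'] at hcov
  calc _ = |M.det| * ∫ ξ : Ed d, |M.det|⁻¹ ^ 2 *
          ((1 + ‖toEuclideanCLM (𝕜 := ℝ) Mᵀ ξ‖ ^ 2) ^ r * ‖FT f ξ‖ ^ 2) := by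
        rw [← hcov]
        congr 2 with ξ
        rw [FT_comp_toEuclideanCLM hM, norm_smul, norm_inv, norm_eq_abs, abs_abs]
        ring
    _ ≤ |M.det| * (|M.det|⁻¹ ^ 2 * hsNorm r f ^ 2) := by
        rw [integral_const_mul, hsNorm_sq]
        gcongr |M.det| * (|M.det|⁻¹ ^ 2 * ?_)
        refine integral_mono_of_nonneg (Eventually.of_forall fun _ => by positivity) hf
          (Eventually.of_forall fun ξ => ?_)
        dsimp only
        gcongr
        exact hcontr ξ
    _ = |M.det|⁻¹ * hsNorm r f ^ 2 := by field_simp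

end LinearChangeOfVariables

section HighFrequencyWave

/-- The tensor power `x ↦ φ(x_1)⋯φ(x_d)`, the spatial profile underlying `uh`. -/
def tensorPow (φ : ℝ → ℝ) (x : Ed d) : ℝ := ∏ i, φ (x i)

theorem contDiff_tensorPow {φ : ℝ → ℝ} {k : WithTop ℕ∞} (hφ : ContDiff ℝ k φ) :
    ContDiff ℝ k (tensorPow φ : Ed d → ℝ) :=
  contDiff_prod fun i _ => hφ.comp (by fun_prop)

theorem hasCompactSupport_tensorPow {φ : ℝ → ℝ} (hφ : HasCompactSupport φ) :
    HasCompactSupport (tensorPow φ : Ed d → ℝ) := by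
  have hbox : IsCompact (WithLp.ofLp ⁻¹' Set.univ.pi fun _ => tsupport φ : Set (Ed d)) :=
    (PiLp.homeomorph 2 _).isCompact_preimage.mpr (isCompact_univ_pi fun _ => hφ)
  refine HasCompactSupport.intro hbox fun x hx => ?_
  obtain ⟨i, hi⟩ : ∃ i, x i ∉ tsupport φ := by simpa using hx
  exact Finset.prod_eq_zero (Finset.mem_univ i) (image_eq_zero_of_notMem_tsupport hi)

variable [NeZero d]

/-- The matrix `diag(L⁻¹, 1, …, 1)`; composing with it stretches a function by the factor `L` in
the first coordinate, the anisotropic scaling of `uh` with `L = n ^ δ`. -/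
def compression (L : ℝ) : Matrix (Fin d) (Fin d) ℝ :=
  diagonal (Function.update 1 0 L⁻¹)

theorem det_compression (L : ℝ) : (compression L : Matrix (Fin d) (Fin d) ℝ).det = L⁻¹ := by
  simp [compression, det_diagonal, Finset.prod_update_of_mem]

theorem norm_toEuclideanCLM_compression_le {L : ℝ} (hL : 1 ≤ L) :
    ‖toEuclideanCLM (𝕜 := ℝ) (compression L : Matrix (Fin d) (Fin d) ℝ)‖ ≤ 1 := by
  open scoped Matrix.Norms.L2Operator in
  rw [l2_opNorm_toEuclideanCLM, compression, l2_opNorm_diagonal,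
    pi_norm_le_iff_of_nonneg zero_le_one]
  intro i
  rcases eq_or_ne i 0 with rfl | hi
  · simpa [abs_of_pos (one_pos.trans_le hL)] using inv_le_one_of_one_le₀ hL
  · simp [hi]

/-- The profile `x ↦ φ(x_1 / L) φ(x_2)⋯φ(x_d)` of `uh` for `L = n ^ δ`, encoded as a linear
rescaling of the tensor power so that the change of variables formula applies to it. -/
def stretchedProfile (φ : ℝ → ℝ) (L : ℝ) (x : Ed d) : ℝ :=
  tensorPow φ (toEuclideanCLM (𝕜 := ℝ) (compression L) x)

theorem stretchedProfile_apply (φ : ℝ → ℝ) (L : ℝ) (x : Ed d) :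
    stretchedProfile φ L x = φ (x 0 / L) * phiTail φ x := by
  rw [stretchedProfile, tensorPow, ← Finset.mul_prod_erase _ _ (Finset.mem_univ 0), phiTail]
  congr 1
  · simp [compression, mulVec_diagonal, div_eq_inv_mul]
  · refine Finset.prod_congr rfl fun i hi => ?_
    simp [compression, mulVec_diagonal, Finset.ne_of_mem_erase hi]

theorem contDiff_stretchedProfile {φ : ℝ → ℝ} {k : WithTop ℕ∞} (hφ : ContDiff ℝ k φ) (L : ℝ) :
    ContDiff ℝ k (stretchedProfile φ L : Ed d → ℝ) :=
  (contDiff_tensorPow hφ).comp (ContinuousLinearMap.contDiff _)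

theorem hasCompactSupport_stretchedProfile {φ : ℝ → ℝ} (hφ : HasCompactSupport φ) {L : ℝ}
    (hL : L ≠ 0) : HasCompactSupport (stretchedProfile φ L : Ed d → ℝ) :=
  (hasCompactSupport_tensorPow hφ).comp_isClosedEmbedding <|
    isClosedEmbedding_toEuclideanCLM (by simpa only [det_compression] using inv_ne_zero hL)

theorem hsNorm_stretchedProfile_sq_le {φ : ℝ → ℝ} (hφ : ContDiff ℝ (⊤ : ℕ∞) φ)
    (hφc : HasCompactSupport φ) {r L : ℝ} (hr : 0 ≤ r) (hL : 1 ≤ L) :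
    hsNorm r (stretchedProfile φ L : Ed d → ℝ) ^ 2 ≤
      L * hsNorm r (tensorPow φ : Ed d → ℝ) ^ 2 := by
  have hL0 : 0 < L := one_pos.trans_le hL
  have hdet : (compression L : Matrix (Fin d) (Fin d) ℝ).det ≠ 0 := by
    rw [det_compression]; positivity
  have hprofile : MemHs r (tensorPow φ : Ed d → ℝ) :=
    memHs_of_contDiff_of_hasCompactSupport (contDiff_tensorPow hφ)
      (hasCompactSupport_tensorPow hφc) r
  have hcomp := hsNorm_comp_toEuclideanCLM_sq_le hr hdet (norm_toEuclideanCLM_compression_le hL)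
    hprofile
  rwa [det_compression, abs_inv, inv_inv, abs_of_pos hL0] at hcomp

theorem uh_apply_zero (s δ : ℝ) (φ : ℝ → ℝ) (ω : ℝ) (n : ℕ) (t : ℝ) (x : Ed d) :
    uh s δ φ ω n t x 0 = (n : ℝ) ^ (-(δ / 2) - s) * (stretchedProfile φ ((n : ℝ) ^ δ) x *
      Real.sin (2 * π * inner ℝ (EuclideanSpace.single 0 (n / (2 * π))) x - ω * t)) := by
  have hphase : 2 * π * inner ℝ (EuclideanSpace.single 0 (n / (2 * π))) x = n * x 0 := by
    simp only [EuclideanSpace.inner_single_left, conj_trivial]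
    field_simp
  rw [stretchedProfile_apply, hphase, uh, if_pos rfl]
  ring

theorem uh_apply_of_ne_zero (s δ : ℝ) (φ : ℝ → ℝ) (ω : ℝ) (n : ℕ) (t : ℝ) (x : Ed d) {j : Fin d}
    (hj : j ≠ 0) : uh s δ φ ω n t x j = 0 :=
  if_neg hj

theorem memHsV_uh {φ : ℝ → ℝ} (hφ : ContDiff ℝ (⊤ : ℕ∞) φ) (hφc : HasCompactSupport φ)
    (r s δ ω : ℝ) {n : ℕ} (hn : 1 ≤ n) (t : ℝ) : MemHsV r (uh (d := d) s δ φ ω n t) := by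
  intro j
  rcases eq_or_ne j 0 with rfl | hj
  · have hL : (n : ℝ) ^ δ ≠ 0 := (rpow_pos_of_pos (by exact_mod_cast hn) δ).ne'
    simp only [uh_apply_zero]
    refine memHs_of_contDiff_of_hasCompactSupport ?_ ?_ r
    · have hψ := contDiff_stretchedProfile (d := d) hφ ((n : ℝ) ^ δ)
      have hinner (a : Ed d) : ContDiff ℝ (⊤ : ℕ∞) fun x => (inner ℝ a x : ℝ) :=
        (innerSL ℝ a).contDiff
      fun_prop
    · exact (hasCompactSupport_stretchedProfile hφc hL).mul_right.mul_left
  · simp only [uh_apply_of_ne_zero s δ φ ω n t _ hj, memHs_zero]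

theorem hsNormV_uh (r s δ : ℝ) (φ : ℝ → ℝ) (ω : ℝ) (n : ℕ) (t : ℝ) :
    hsNormV r (uh (d := d) s δ φ ω n t) = hsNorm r fun x : Ed d => uh s δ φ ω n t x 0 :=
  Finset.sum_eq_single 0
    (fun j _ hj => by simp only [uh_apply_of_ne_zero s δ φ ω n t _ hj, hsNorm_zero]) (by simp)

theorem one_add_freq_sq_rpow_le {x : ℝ} (hx : 1 ≤ x) (r : ℝ) :
    (1 + (x / (2 * π)) ^ 2) ^ r ≤ ((2 * π) ^ 2) ^ |r| * (x ^ r) ^ 2 := by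
  have hx2 : 1 ≤ x ^ 2 := one_le_pow₀ hx
  have hπ : 2 ≤ (2 * π) ^ 2 := by nlinarith [pi_gt_three]
  have hle : (x / (2 * π)) ^ 2 ≤ x ^ 2 := by
    rw [div_pow]
    exact div_le_self (by positivity) (by linarith)
  have hge : x ^ 2 = (2 * π) ^ 2 * (x / (2 * π)) ^ 2 := by field_simp
  have hswap : (x ^ r) ^ 2 = (x ^ 2) ^ r := by
    rw [← rpow_mul_natCast (by positivity), ← rpow_natCast_mul (by positivity), mul_comm]
  rw [hswap]
  exact rpow_le_rpow_abs_mul_rpow (by positivity) (by positivity) (by nlinarith) (by nlinarith) r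

theorem hsNormV_uh_sq_le {δ : ℝ} (hδ : 0 ≤ δ) {φ : ℝ → ℝ} (hφ : ContDiff ℝ (⊤ : ℕ∞) φ)
    (hφc : HasCompactSupport φ) (r s ω : ℝ) {n : ℕ} (hn : 1 ≤ n) (t : ℝ) :
    hsNormV r (uh (d := d) s δ φ ω n t) ^ 2 ≤
      2 ^ |r| * ((2 * π) ^ 2) ^ |r| * hsNorm |r| (tensorPow φ : Ed d → ℝ) ^ 2 *
        ((n : ℝ) ^ (r - s)) ^ 2 := by
  have hn1 : (1 : ℝ) ≤ n := by exact_mod_cast hn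
  have hn0 : (0 : ℝ) < n := one_pos.trans_le hn1
  set L : ℝ := (n : ℝ) ^ δ
  set A : ℝ := (n : ℝ) ^ (-(δ / 2) - s)
  set K : ℝ := hsNorm |r| (tensorPow φ : Ed d → ℝ)
  have hL : 1 ≤ L := one_le_rpow hn1 hδ
  have hψ : ContDiff ℝ (⊤ : ℕ∞) (stretchedProfile φ L : Ed d → ℝ) := contDiff_stretchedProfile hφ L
  have hψc : HasCompactSupport (stretchedProfile φ L : Ed d → ℝ) :=
    hasCompactSupport_stretchedProfile hφc (one_pos.trans_le hL).ne'
  have hpowers : A ^ 2 * ((n : ℝ) ^ r) ^ 2 * L = ((n : ℝ) ^ (r - s)) ^ 2 := by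
    simp only [A, L, ← rpow_mul_natCast hn0.le, ← rpow_add hn0]
    congr 1
    push_cast
    ring
  have hmod := hsNorm_mul_sin_sq_le (hψ.continuous.integrable_of_hasCompactSupport hψc)
    (memHs_of_contDiff_of_hasCompactSupport hψ hψc |r|)
    (EuclideanSpace.single 0 (n / (2 * π))) (ω * t)
  rw [PiLp.norm_single, norm_eq_abs, sq_abs] at hmod
  calc hsNormV r (uh (d := d) s δ φ ω n t) ^ 2
      ≤ A ^ 2 * (2 ^ |r| * (1 + (n / (2 * π)) ^ 2) ^ r *
          hsNorm |r| (stretchedProfile φ L : Ed d → ℝ) ^ 2) := by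
        simp only [hsNormV_uh, uh_apply_zero, hsNorm_const_mul_sq]
        gcongr
    _ ≤ A ^ 2 * (2 ^ |r| * (((2 * π) ^ 2) ^ |r| * ((n : ℝ) ^ r) ^ 2) * (L * K ^ 2)) := by
        gcongr
        · exact one_add_freq_sq_rpow_le hn1 r
        · exact hsNorm_stretchedProfile_sq_le hφ hφc (abs_nonneg r) hL
    _ = 2 ^ |r| * ((2 * π) ^ 2) ^ |r| * K ^ 2 * ((n : ℝ) ^ (r - s)) ^ 2 := by
        rw [← hpowers]; ring

end HighFrequencyWave

theorem uh_hr_bound_general (d : ℕ) [NeZero d] (s δ : ℝ) (hδ : 0 ≤ δ) (φ : ℝ → ℝ)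
    (hφ : ContDiff ℝ (⊤ : ℕ∞) φ) (hφc : HasCompactSupport φ) (r : ℝ) :
    ∃ C : ℝ, 0 < C ∧ ∀ n : ℕ, 1 ≤ n → ∀ t ω : ℝ,
      MemHsV r (uh (d := d) s δ φ ω n t) ∧
        hsNormV r (uh (d := d) s δ φ ω n t) ≤ C * (n : ℝ) ^ (r - s) := by
  set C₀ : ℝ := 2 ^ |r| * ((2 * π) ^ 2) ^ |r| * hsNorm |r| (tensorPow φ : Ed d → ℝ) ^ 2
  refine ⟨√C₀ + 1, by positivity, fun n hn t ω => ⟨memHsV_uh hφ hφc r s δ ω hn t, ?_⟩⟩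
  calc hsNormV r (uh (d := d) s δ φ ω n t) ≤ √(C₀ * ((n : ℝ) ^ (r - s)) ^ 2) :=
        le_sqrt_of_sq_le (hsNormV_uh_sq_le hδ hφ hφc r s ω hn t)
    _ = √C₀ * (n : ℝ) ^ (r - s) := by rw [sqrt_mul (by positivity), sqrt_sq (by positivity)]
    _ ≤ (√C₀ + 1) * (n : ℝ) ^ (r - s) := by gcongr; linarith

/-- `H^r` bound on the high-frequency approximate velocity: `‖u^{h,ω,n}(t)‖_{H^r} ≲ n^{r-s}`. -/
theorem uh_hr_bound (d : ℕ) [NeZero d] (hd : 2 ≤ d) (s δ : ℝ)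
    (hs : 1 + (d : ℝ) / 2 < s) (hδ1 : 0 < δ) (hδ2 : δ < 1/2)
    (φ : ℝ → ℝ) (hφsm : ContDiff ℝ (⊤ : ℕ∞) φ) (hφc : HasCompactSupport φ)
    (hφ1 : ∀ x : ℝ, |x| ≤ 1 → φ x = 1) (hφ0 : ∀ x : ℝ, 2 ≤ |x| → φ x = 0)
    (r : ℝ) (hr : 0 ≤ r) :
    ∃ C : ℝ, 0 < C ∧ ∀ n : ℕ, 1 ≤ n → ∀ t ω : ℝ, ω = 1 ∨ ω = -1 →
      hsNormV r (uh (d := d) s δ φ ω n t) ≤ C * (n : ℝ) ^ (r - s) := by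
  obtain ⟨C, hC, hbound⟩ := uh_hr_bound_general d s δ hδ1.le φ hφsm hφc r
  exact ⟨C, hC, fun n hn t ω _ => (hbound n hn t ω).2⟩
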